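/- arXiv:1903.02360 — 4 statements merged into one kernel-verified Lean document; each statement's English description precedes it below -/
import Mathlib

section
/- Assume D : 𝒞 → ℝⁿ satisfies (A1) and (A5). Let x, x̄ : [−r₀,∞) → ℝⁿ be continuous functions such that x(θ) ≤ x̄(θ) componentwise for all θ ∈ [−r₀,0] and x(0) − D(x₀) ≤ x̄(0) − D(x̄₀) componentwise (i.e. the initial segments satisfy x₀ ≤_D x̄₀). Define, in [0,∞] with inf ∅ = ∞, the hitting times ρ = inf{ t > 0 : xⁱ(t) > x̄ⁱ(t) for some 1 ≤ i ≤ n } and Υ = inf{ t > 0 : xⁱ(t) − Dⁱ(x_t) > x̄ⁱ(t) − Dⁱ(x̄_t) for some 1 ≤ i ≤ n }. Then Υ ≤ ρ. -/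
open MeasureTheory Filter
open scoped ENNReal NNReal

noncomputable section

/-- The path space 𝒞 = C([-r₀,0]; ℝⁿ), endowed with the uniform norm. -/
abbrev PathSp (r₀ : ℝ) (n : ℕ) := C(Set.Icc (-r₀) (0:ℝ), EuclideanSpace ℝ (Fin n))

/-- Componentwise pointwise order ξ ≤ η on the path space. -/
def PathLe {r₀ : ℝ} {n : ℕ} (ξ η : PathSp r₀ n) : Prop :=
  ∀ (θ : Set.Icc (-r₀) (0:ℝ)) (i : Fin n), ξ θ i ≤ η θ i

/-- The point 0 of the interval [-r₀,0]. -/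
def zpt {r₀ : ℝ} (hr₀ : 0 < r₀) : Set.Icc (-r₀) (0:ℝ) :=
  ⟨0, ⟨by linarith, le_refl 0⟩⟩

/-- max_{1≤i≤n} ‖ξⁱ − ηⁱ‖_∞. -/
def MaxCompDist {r₀ : ℝ} {n : ℕ} (ξ η : PathSp r₀ n) : ℝ :=
  ⨆ i : Fin n, ⨆ θ : Set.Icc (-r₀) (0:ℝ), |ξ θ i - η θ i|

/-- The order ξ ≤_D η on the path space: ξ ≤ η and ξ(0) − D(ξ) ≤ η(0) − D(η). -/
def PathLeD {r₀ : ℝ} (hr₀ : 0 < r₀) {n : ℕ}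
    (D : PathSp r₀ n → EuclideanSpace ℝ (Fin n)) (ξ η : PathSp r₀ n) : Prop :=
  PathLe ξ η ∧ ∀ i, ξ (zpt hr₀) i - D ξ i ≤ η (zpt hr₀) i - D η i

/-- The constant path r𝟙 all of whose components equal r. -/
def constPath (r₀ : ℝ) (n : ℕ) (r : ℝ) : PathSp r₀ n :=
  ContinuousMap.const _ ((WithLp.equiv 2 (Fin n → ℝ)).symm fun _ => r)

/-- The time shift [-r₀,0] ∋ θ ↦ t + θ ∈ [-r₀,∞) for t ≥ 0. -/
def segMap {r₀ : ℝ} (t : ℝ) (ht : 0 ≤ t) (θ : Set.Icc (-r₀) (0:ℝ)) : Set.Ici (-r₀ : ℝ) :=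
  ⟨t + θ.1, by have h := θ.2.1; simp only [Set.mem_Ici]; linarith⟩

/-- The segment x_t ∈ 𝒞 of a continuous function x : [-r₀,∞) → ℝⁿ, x_t(θ) = x(t+θ). -/
def segmentAt {r₀ : ℝ} {n : ℕ} (x : C(Set.Ici (-r₀ : ℝ), EuclideanSpace ℝ (Fin n)))
    (t : ℝ) (ht : 0 ≤ t) : PathSp r₀ n :=
  ⟨fun θ => x (segMap t ht θ),
   x.continuous.comp ((continuous_const.add continuous_subtype_val).subtype_mk _)⟩

/-- A point t ≥ 0 viewed as an element of [-r₀, ∞). -/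
def iciPt {r₀ : ℝ} (hr₀ : 0 < r₀) (t : ℝ) (ht : 0 ≤ t) : Set.Ici (-r₀ : ℝ) :=
  ⟨t, by simp only [Set.mem_Ici]; linarith⟩

/-- The path space carries the Borel σ-algebra. -/
instance instPathSpMeas (r₀ : ℝ) (n : ℕ) : MeasurableSpace (PathSp r₀ n) := borel _
instance (r₀ : ℝ) (n : ℕ) : BorelSpace (PathSp r₀ n) := ⟨rfl⟩

/-- A function f : 𝒞 → ℝ is D-increasing if ξ ≤_D η implies f(ξ) ≤ f(η). -/
def DIncreasing {r₀ : ℝ} (hr₀ : 0 < r₀) {n : ℕ}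
    (D : PathSp r₀ n → EuclideanSpace ℝ (Fin n)) (f : PathSp r₀ n → ℝ) : Prop :=
  ∀ ξ η, PathLeD hr₀ D ξ η → f ξ ≤ f η

/-- μ ≤_D ν : ∫ f dμ ≤ ∫ f dν for every bounded Borel measurable D-increasing f. -/
def MeasLeD {r₀ : ℝ} (hr₀ : 0 < r₀) {n : ℕ}
    (D : PathSp r₀ n → EuclideanSpace ℝ (Fin n)) (μ ν : Measure (PathSp r₀ n)) : Prop :=
  ∀ f : PathSp r₀ n → ℝ, Measurable f → (∃ C, ∀ ξ, |f ξ| ≤ C) →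
    DIncreasing hr₀ D f → ∫ ξ, f ξ ∂μ ≤ ∫ ξ, f ξ ∂ν

/-- π is a coupling of (μ, ν). -/
def IsCoupling {r₀ : ℝ} {n : ℕ} (π : Measure (PathSp r₀ n × PathSp r₀ n))
    (μ ν : Measure (PathSp r₀ n)) : Prop :=
  IsProbabilityMeasure π ∧ π.map Prod.fst = μ ∧ π.map Prod.snd = ν

/-- The L²-Wasserstein distance W₂(μ,ν) on the path space. -/
def W2 {r₀ : ℝ} {n : ℕ} (μ ν : Measure (PathSp r₀ n)) : ℝ :=
  Real.sqrt (⨅ π ∈ {π : Measure (PathSp r₀ n × PathSp r₀ n) | IsCoupling π μ ν},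
    ∫⁻ p, (‖p.1 - p.2‖₊ : ℝ≥0∞) ^ 2 ∂π).toReal

/-- μ ∈ 𝒫₂(𝒞): a Borel probability measure with finite second moment. -/
def P2 {r₀ : ℝ} {n : ℕ} (μ : Measure (PathSp r₀ n)) : Prop :=
  IsProbabilityMeasure μ ∧ Integrable (fun ξ : PathSp r₀ n => ‖ξ‖^2) μ

/-- under (A1) and (A5), the hitting time Υ of
{xⁱ(t) − Dⁱ(x_t) > x̄ⁱ(t) − Dⁱ(x̄_t) for some i} is dominated by the hitting time ρ of
{xⁱ(t) > x̄ⁱ(t) for some i}, for continuous x ≤_D-ordered initial segments. -/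
theorem stmt0 {r₀ : ℝ} (hr₀ : 0 < r₀) {n : ℕ} (hn : 1 ≤ n)
    (D : PathSp r₀ n → EuclideanSpace ℝ (Fin n)) (κ : ℝ)
    (hκ₀ : 0 < κ) (hκ₁ : κ < 1)
    (hA1zero : D 0 = 0)
    (hA1mono : ∀ ξ η : PathSp r₀ n, PathLe ξ η → ∀ i, D ξ i ≤ D η i)
    (hA5 : ∀ ξ η : PathSp r₀ n, ‖D ξ - D η‖ ≤ κ * MaxCompDist ξ η)
    (x y : C(Set.Ici (-r₀ : ℝ), EuclideanSpace ℝ (Fin n)))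
    (hinit : PathLe (segmentAt x 0 le_rfl) (segmentAt y 0 le_rfl))
    (hinitD : ∀ i, x (iciPt hr₀ 0 le_rfl) i - D (segmentAt x 0 le_rfl) i ≤
      y (iciPt hr₀ 0 le_rfl) i - D (segmentAt y 0 le_rfl) i) :
    sInf {T : ℝ≥0∞ | ∃ t : ℝ, ∃ ht : 0 < t, T = ENNReal.ofReal t ∧
        ∃ i, y (iciPt hr₀ t ht.le) i - D (segmentAt y t ht.le) i <
             x (iciPt hr₀ t ht.le) i - D (segmentAt x t ht.le) i} ≤
    sInf {T : ℝ≥0∞ | ∃ t : ℝ, ∃ ht : 0 < t, T = ENNReal.ofReal t ∧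
        ∃ i, y (iciPt hr₀ t ht.le) i < x (iciPt hr₀ t ht.le) i} := by
  have hn' : Nonempty (Fin n) := ⟨⟨0, hn⟩⟩
  have hI' : Nonempty (Set.Icc (-r₀) (0:ℝ)) := ⟨zpt hr₀⟩
  apply le_sInf
  rintro T ⟨s, hs, rfl, j, hj⟩
  by_contra hlt
  rw [not_le] at hlt
  have hle : ∀ t (ht : 0 < t), t ≤ s → ∀ i,
      x (iciPt hr₀ t ht.le) i - D (segmentAt x t ht.le) i ≤
        y (iciPt hr₀ t ht.le) i - D (segmentAt y t ht.le) i := by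
    intro t ht hts i
    by_contra hc
    rw [not_le] at hc
    have h1 := sInf_le (show ENNReal.ofReal t ∈ {T : ℝ≥0∞ | ∃ t : ℝ, ∃ ht : 0 < t,
        T = ENNReal.ofReal t ∧
        ∃ i, y (iciPt hr₀ t ht.le) i - D (segmentAt y t ht.le) i <
             x (iciPt hr₀ t ht.le) i - D (segmentAt x t ht.le) i} from ⟨t, ht, rfl, i, hc⟩)
    exact absurd (hlt.trans_le h1) (not_lt.mpr (ENNReal.ofReal_le_ofReal hts))
  -- maximise over the compact time interval
  have hcpt : IsCompact (Set.Iic (iciPt hr₀ s hs.le)) := by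
    rw [Subtype.isCompact_iff]
    have : (Subtype.val '' Set.Iic (iciPt hr₀ s hs.le)) = Set.Icc (-r₀) s := by
      ext u
      constructor
      · rintro ⟨v, hv, rfl⟩
        exact ⟨v.2, hv⟩
      · rintro ⟨h1, h2⟩
        exact ⟨⟨u, h1⟩, h2, rfl⟩
    rw [this]
    exact isCompact_Icc
  have hmax : ∀ i : Fin n, ∃ p ∈ Set.Iic (iciPt hr₀ s hs.le),
      IsMaxOn (fun p => x p i - y p i) (Set.Iic (iciPt hr₀ s hs.le)) p := fun i =>
    hcpt.exists_isMaxOn ⟨iciPt hr₀ s hs.le, Set.mem_Iic.mpr le_rfl⟩ (by fun_prop)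
  choose p hp hpm using hmax
  obtain ⟨i, hi⟩ := Finite.exists_max (fun i => x (p i) i - y (p i) i)
  have hM : ∀ k q, q ∈ Set.Iic (iciPt hr₀ s hs.le) →
      x q k - y q k ≤ x (p i) i - y (p i) i := fun k q hq => (hpm k hq).trans (hi k)
  have hpos : 0 < x (p i) i - y (p i) i := by
    have := hM j (iciPt hr₀ s hs.le) (Set.mem_Iic.mpr le_rfl)
    linarith
  have hmem := hp i
  generalize p i = q at hM hpos hmem
  obtain ⟨t, htr⟩ := q
  have ht : 0 < t := by
    by_contra hc
    rw [not_lt] at hc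
    have h := hinit ⟨t, htr, hc⟩ i
    simp only [segmentAt, segMap, ContinuousMap.coe_mk, zero_add] at h
    linarith
  have hts : t ≤ s := hmem
  have h1 := hle t ht hts i
  let z : PathSp r₀ n := ⟨fun θ => WithLp.toLp 2 (fun k =>
    max (segmentAt x t ht.le θ k) (segmentAt y t ht.le θ k)), by fun_prop⟩
  have h2 := hA1mono (segmentAt x t ht.le) z (fun θ k => le_max_left _ _) i
  have h3 := hA5 z (segmentAt y t ht.le)
  have h4 : MaxCompDist z (segmentAt y t ht.le) ≤ x ⟨t, htr⟩ i - y ⟨t, htr⟩ i := by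
    refine ciSup_le fun k => ciSup_le fun θ => ?_
    have h5 := hM k (segMap t ht.le θ) (by
      have := θ.2.2
      change t + θ.1 ≤ s
      linarith)
    change |max (x (segMap t ht.le θ) k) (y (segMap t ht.le θ) k) - y (segMap t ht.le θ) k| ≤ _
    rw [abs_of_nonneg (sub_nonneg.mpr (le_max_right _ _)), sub_le_iff_le_add]
    exact max_le (by linarith) (by linarith)
  have h6 := (le_abs_self _).trans (PiLp.norm_apply_le (D z - D (segmentAt y t ht.le)) i)
  simp only [PiLp.sub_apply] at h6
  simp only [iciPt] at h1
  nlinarith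

end
end

section
/- Assume D : 𝒞 → ℝⁿ satisfies (A1) and (A5). Then for every component index 1 ≤ i ≤ n and all ξ, η ∈ 𝒞 with ξⁱ(0) − Dⁱ(ξ) = ηⁱ(0) − Dⁱ(η), there exists ζ ∈ 𝒞 such that ζ ≤ ξ ∧ η (the componentwise pointwise minimum of ξ and η) and ζⁱ(0) − Dⁱ(ζ) = ξⁱ(0) − Dⁱ(ξ) = ηⁱ(0) − Dⁱ(η). -/
open MeasureTheory Filter
open scoped ENNReal NNReal

noncomputable section

/-- The path `ξ ∧ η - r`. -/
def minShift {r₀ : ℝ} {n : ℕ} (ξ η : PathSp r₀ n) (r : ℝ) : PathSp r₀ n :=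
  ⟨fun θ => WithLp.toLp 2 (fun j => min (ξ θ j) (η θ j) - r), by fun_prop⟩

theorem minShift_apply {r₀ : ℝ} {n : ℕ} (ξ η : PathSp r₀ n) (r : ℝ)
    (θ : Set.Icc (-r₀) (0:ℝ)) (j : Fin n) :
    minShift ξ η r θ j = min (ξ θ j) (η θ j) - r := rfl

theorem maxCompDist_minShift {r₀ : ℝ} (hr₀ : 0 < r₀) {n : ℕ} (hn : 1 ≤ n)
    (ξ η : PathSp r₀ n) (r s : ℝ) :
    MaxCompDist (minShift ξ η r) (minShift ξ η s) ≤ |r - s| := by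
  have : Nonempty (Fin n) := ⟨⟨0, hn⟩⟩
  have : Nonempty (Set.Icc (-r₀) (0:ℝ)) := ⟨zpt hr₀⟩
  unfold MaxCompDist
  refine ciSup_le fun i => ciSup_le fun θ => ?_
  rw [minShift_apply, minShift_apply, abs_sub_comm r s]
  apply le_of_eq
  congr 1
  ring

/-- under (A1) and (A5), for ξ, η with ξⁱ(0) − Dⁱ(ξ) = ηⁱ(0) − Dⁱ(η) there
is ζ ≤ ξ ∧ η with ζⁱ(0) − Dⁱ(ζ) = ξⁱ(0) − Dⁱ(ξ) = ηⁱ(0) − Dⁱ(η). -/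
theorem stmt2 {r₀ : ℝ} (hr₀ : 0 < r₀) {n : ℕ} (hn : 1 ≤ n)
    (D : PathSp r₀ n → EuclideanSpace ℝ (Fin n)) (κ : ℝ)
    (hκ₀ : 0 < κ) (hκ₁ : κ < 1)
    (hA1zero : D 0 = 0)
    (hA1mono : ∀ ξ η : PathSp r₀ n, PathLe ξ η → ∀ i, D ξ i ≤ D η i)
    (hA5 : ∀ ξ η : PathSp r₀ n, ‖D ξ - D η‖ ≤ κ * MaxCompDist ξ η)
    (i : Fin n) (ξ η : PathSp r₀ n)
    (heq : ξ (zpt hr₀) i - D ξ i = η (zpt hr₀) i - D η i) :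
    ∃ ζ : PathSp r₀ n,
      (∀ (θ : Set.Icc (-r₀) (0:ℝ)) (j : Fin n), ζ θ j ≤ min (ξ θ j) (η θ j)) ∧
      ζ (zpt hr₀) i - D ζ i = ξ (zpt hr₀) i - D ξ i ∧
      ζ (zpt hr₀) i - D ζ i = η (zpt hr₀) i - D η i := by
  have hL : ∀ r s : ℝ, |D (minShift ξ η r) i - D (minShift ξ η s) i| ≤ κ * |r - s| := by
    intro r s
    have h1 := PiLp.norm_apply_le (D (minShift ξ η r) - D (minShift ξ η s)) i
    rw [Real.norm_eq_abs, PiLp.sub_apply] at h1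
    exact h1.trans ((hA5 _ _).trans
      (mul_le_mul_of_nonneg_left (maxCompDist_minShift hr₀ hn ξ η r s) hκ₀.le))
  have hcont : Continuous fun r : ℝ => D (minShift ξ η r) i := by
    refine (LipschitzWith.of_dist_le_mul (K := ⟨κ, hκ₀.le⟩) fun r s => ?_).continuous
    rw [Real.dist_eq, Real.dist_eq]
    exact hL r s
  set g : ℝ → ℝ := fun r => minShift ξ η r (zpt hr₀) i - D (minShift ξ η r) i with hg
  have hgc : Continuous g := by
    simp only [hg, minShift_apply]
    exact (continuous_const.sub continuous_id).sub hcont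
  set c := ξ (zpt hr₀) i - D ξ i with hc
  have hDξ : D (minShift ξ η 0) i ≤ D ξ i := hA1mono _ _ (fun θ j => by
    rw [minShift_apply, sub_zero]; exact min_le_left _ _) i
  have hDη : D (minShift ξ η 0) i ≤ D η i := hA1mono _ _ (fun θ j => by
    rw [minShift_apply, sub_zero]; exact min_le_right _ _) i
  have h0 : c ≤ g 0 := by
    simp only [hg, minShift_apply, sub_zero]
    rcases min_choice (ξ (zpt hr₀) i) (η (zpt hr₀) i) with h | h <;> rw [h] <;> linarith
  have hk : 0 < 1 - κ := by linarith
  set R := (g 0 - c) / (1 - κ) with hR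
  have hR0 : 0 ≤ R := div_nonneg (by linarith) hk.le
  have hRe : R * (1 - κ) = g 0 - c := div_mul_cancel₀ _ hk.ne'
  have h1 : g R ≤ c := by
    have h2 := (abs_le.1 (hL R 0)).1
    rw [sub_zero, abs_of_nonneg hR0] at h2
    have h3 : g R = g 0 - R - (D (minShift ξ η R) i - D (minShift ξ η 0) i) := by
      simp only [hg, minShift_apply]
      ring
    rw [h3]
    linarith
  obtain ⟨r, hr, hgr⟩ := intermediate_value_Icc' hR0 hgc.continuousOn ⟨h1, h0⟩
  refine ⟨minShift ξ η r, fun θ j => ?_, hgr, hgr.trans heq⟩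
  rw [minShift_apply]
  linarith [hr.1]

end
end

section
/- Assume D : 𝒞 → ℝⁿ satisfies (A1) and (A5). Then for any two Borel probability measures μ, ν on 𝒞 with finite second moment, there exists a Borel probability measure μ̃ on 𝒞 with finite second moment such that μ̃ ≤_D μ and μ̃ ≤_D ν. -/
open MeasureTheory Filter
open scoped ENNReal NNReal

noncomputable section

theorem constPath_eq_smul (r₀ : ℝ) (n : ℕ) (r : ℝ) :
    constPath r₀ n r = r • constPath r₀ n 1 := by
  ext θ i
  simp [constPath]

theorem maxCompDist_zero_le {r₀ : ℝ} {n : ℕ} (ξ : PathSp r₀ n) (c : ℝ) (hc : 0 ≤ c)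
    (h : ∀ θ i, |ξ θ i| ≤ c) : MaxCompDist ξ 0 ≤ c := by
  unfold MaxCompDist
  refine Real.iSup_le (fun i => Real.iSup_le (fun θ => ?_) hc) hc
  simpa using h θ i

theorem coord_abs_le {r₀ : ℝ} {n : ℕ} (ξ : PathSp r₀ n) (θ : Set.Icc (-r₀) (0:ℝ)) (i : Fin n) :
    |ξ θ i| ≤ ‖ξ‖ := by
  have h1 := PiLp.norm_apply_le (ξ θ) i
  rw [Real.norm_eq_abs] at h1
  exact h1.trans (ξ.norm_coe_le_norm θ)

theorem constPath_leD {r₀ : ℝ} (hr₀ : 0 < r₀) {n : ℕ}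
    (D : PathSp r₀ n → EuclideanSpace ℝ (Fin n)) (κ : ℝ)
    (hκ₀ : 0 < κ) (hκ₁ : κ < 1) (hA1zero : D 0 = 0)
    (hA5 : ∀ ξ η : PathSp r₀ n, ‖D ξ - D η‖ ≤ κ * MaxCompDist ξ η)
    (ξ : PathSp r₀ n) (R : ℝ) (hR : 2 * ‖ξ‖ ≤ (1 - κ) * R) :
    PathLeD hr₀ D (constPath r₀ n (-R)) ξ := by
  have hξ := norm_nonneg ξ
  have hR0 : 0 ≤ R := by
    by_contra hneg
    nlinarith
  have hRξ : ‖ξ‖ ≤ R := by nlinarith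
  have hc : ∀ θ i, constPath r₀ n (-R) θ i = -R := fun θ i => by simp [constPath]
  have hD : ∀ (ζ : PathSp r₀ n) (c : ℝ), 0 ≤ c → (∀ θ i, |ζ θ i| ≤ c) →
      ∀ i, |D ζ i| ≤ κ * c := by
    intro ζ c hc0 h i
    have h1 := hA5 ζ 0
    rw [hA1zero, sub_zero] at h1
    have h2 := PiLp.norm_apply_le (D ζ) i
    rw [Real.norm_eq_abs] at h2
    exact h2.trans (h1.trans (mul_le_mul_of_nonneg_left (maxCompDist_zero_le ζ c hc0 h) hκ₀.le))
  refine ⟨fun θ i => ?_, fun i => ?_⟩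
  · rw [hc]
    have := (abs_le.1 (coord_abs_le ξ θ i)).1
    linarith
  · rw [hc]
    have h1 := (abs_le.1 (hD (constPath r₀ n (-R)) R hR0
      (fun θ i => by rw [hc, abs_neg, abs_of_nonneg hR0]) i)).1
    have h2 := (abs_le.1 (hD ξ ‖ξ‖ hξ (coord_abs_le ξ) i)).2
    have h3 := (abs_le.1 (coord_abs_le ξ (zpt hr₀) i)).1
    nlinarith

/-- under (A1) and (A5), for any Borel probability measures μ, ν on 𝒞 with
finite second moment there is a Borel probability measure μ̃ with finite second moment
with μ̃ ≤_D μ and μ̃ ≤_D ν. -/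
theorem stmt3 {r₀ : ℝ} (hr₀ : 0 < r₀) {n : ℕ} (hn : 1 ≤ n)
    (D : PathSp r₀ n → EuclideanSpace ℝ (Fin n)) (κ : ℝ)
    (hκ₀ : 0 < κ) (hκ₁ : κ < 1)
    (hA1zero : D 0 = 0)
    (hA1mono : ∀ ξ η : PathSp r₀ n, PathLe ξ η → ∀ i, D ξ i ≤ D η i)
    (hA5 : ∀ ξ η : PathSp r₀ n, ‖D ξ - D η‖ ≤ κ * MaxCompDist ξ η)
    (μ ν : Measure (PathSp r₀ n))
    (hμ : IsProbabilityMeasure μ) (hν : IsProbabilityMeasure ν)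
    (hμ2 : Integrable (fun ξ : PathSp r₀ n => ‖ξ‖^2) μ)
    (hν2 : Integrable (fun ξ : PathSp r₀ n => ‖ξ‖^2) ν) :
    ∃ μ' : Measure (PathSp r₀ n), IsProbabilityMeasure μ' ∧
      Integrable (fun ξ : PathSp r₀ n => ‖ξ‖^2) μ' ∧
      MeasLeD hr₀ D μ' μ ∧ MeasLeD hr₀ D μ' ν := by
  have hk : 0 < 1 - κ := by linarith
  set R : PathSp r₀ n × PathSp r₀ n → ℝ := fun p => 2 * (‖p.1‖ + ‖p.2‖) / (1 - κ) with hRdef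
  have hRm : Measurable R :=
    (((continuous_norm.measurable.comp measurable_fst).add
      (continuous_norm.measurable.comp measurable_snd)).const_mul 2).div_const _
  have hcc : Continuous (fun r : ℝ => constPath r₀ n r) := by
    have h : (fun r : ℝ => constPath r₀ n r) = fun r : ℝ => r • constPath r₀ n 1 :=
      funext (constPath_eq_smul r₀ n)
    rw [h]
    exact continuous_id.smul continuous_const
  set G : PathSp r₀ n × PathSp r₀ n → PathSp r₀ n := fun p => constPath r₀ n (-R p) with hG
  have hGm : Measurable G := hcc.measurable.comp hRm.neg
  have hmul : ∀ p, (1 - κ) * R p = 2 * (‖p.1‖ + ‖p.2‖) := fun p => by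
    rw [hRdef]; field_simp
  have hle1 : ∀ p, PathLeD hr₀ D (G p) p.1 := fun p =>
    constPath_leD hr₀ D κ hκ₀ hκ₁ hA1zero hA5 p.1 (R p) (by
      rw [hmul]; linarith [norm_nonneg p.2])
  have hle2 : ∀ p, PathLeD hr₀ D (G p) p.2 := fun p =>
    constPath_leD hr₀ D κ hκ₀ hκ₁ hA1zero hA5 p.2 (R p) (by
      rw [hmul]; linarith [norm_nonneg p.1])
  have hbi : ∀ (f : PathSp r₀ n → ℝ), Measurable f → (∃ C, ∀ ξ, |f ξ| ≤ C) →
      ∀ T : PathSp r₀ n × PathSp r₀ n → PathSp r₀ n, Measurable T →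
      Integrable (fun p => f (T p)) (μ.prod ν) := by
    rintro f hf ⟨C, hC⟩ T hT
    exact Integrable.of_bound (hf.comp hT).aestronglyMeasurable C
      (Eventually.of_forall fun p => hC _)
  refine ⟨(μ.prod ν).map G, Measure.isProbabilityMeasure_map hGm.aemeasurable, ?_, ?_, ?_⟩
  · have hm : Measurable (fun ξ : PathSp r₀ n => ‖ξ‖ ^ 2) :=
      (continuous_norm.pow 2).measurable
    rw [integrable_map_measure hm.aestronglyMeasurable hGm.aemeasurable]
    have hdom : Integrable (fun p : PathSp r₀ n × PathSp r₀ n =>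
        (8 / (1 - κ) ^ 2 * ‖constPath r₀ n 1‖ ^ 2) * (‖p.1‖ ^ 2 + ‖p.2‖ ^ 2)) (μ.prod ν) :=
      ((hμ2.comp_fst ν).add (hν2.comp_snd μ)).const_mul _
    refine hdom.mono' (hm.comp hGm).aestronglyMeasurable (Eventually.of_forall fun p => ?_)
    have e1 : ‖G p‖ ^ 2 = (R p) ^ 2 * ‖constPath r₀ n 1‖ ^ 2 := by
      rw [hG]
      simp only
      rw [constPath_eq_smul, norm_smul, mul_pow, Real.norm_eq_abs, sq_abs, neg_sq]
    have e2 : (R p) ^ 2 ≤ 8 / (1 - κ) ^ 2 * (‖p.1‖ ^ 2 + ‖p.2‖ ^ 2) := by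
      rw [hRdef]
      simp only
      rw [div_pow, div_mul_eq_mul_div]
      apply div_le_div_of_nonneg_right _ (sq_nonneg _)
      nlinarith [sq_nonneg (‖p.1‖ - ‖p.2‖)]
    simp only [Function.comp]
    rw [Real.norm_of_nonneg (sq_nonneg _), e1]
    calc _ ≤ _ := mul_le_mul_of_nonneg_right e2 (sq_nonneg _)
      _ = _ := by ring
  · intro f hf hb hinc
    rw [integral_map hGm.aemeasurable hf.aestronglyMeasurable]
    have e : ∫ ξ, f ξ ∂μ = ∫ p, f p.1 ∂(μ.prod ν) := by
      rw [integral_fun_fst]; simp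
    rw [e]
    exact integral_mono (hbi f hf hb G hGm) (hbi f hf hb _ measurable_fst)
      (fun p => hinc _ _ (hle1 p))
  · intro f hf hb hinc
    rw [integral_map hGm.aemeasurable hf.aestronglyMeasurable]
    have e : ∫ ξ, f ξ ∂ν = ∫ p, f p.2 ∂(μ.prod ν) := by
      rw [integral_fun_snd]; simp
    rw [e]
    exact integral_mono (hbi f hf hb G hGm) (hbi f hf hb _ measurable_snd)
      (fun p => hinc _ _ (hle2 p))


end
end

section
/- Assume D : 𝒞 → ℝⁿ satisfies D(0) = 0 and (A5) with constant κ ∈ (0,1). Then for any ξ₁, ξ₂ ∈ 𝒞 there exists α ≤ 0 such that the constant path α𝟙 satisfies α𝟙 ≤_D ξ₁ and α𝟙 ≤_D ξ₂; that is, α ≤ ξ_kⁱ(θ) for all k ∈ {1,2}, all components i and all θ ∈ [−r₀,0], and α − Dⁱ(α𝟙) ≤ ξ_kⁱ(0) − Dⁱ(ξ_k) for all k ∈ {1,2} and all i. -/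
open MeasureTheory Filter
open scoped ENNReal NNReal

noncomputable section

theorem stmt6_abs_coord {n : ℕ} (v : EuclideanSpace ℝ (Fin n)) (i : Fin n) : |v i| ≤ ‖v‖ := by
  simpa [Real.norm_eq_abs] using PiLp.norm_apply_le v i

theorem stmt6_D_bound {r₀ : ℝ} {n : ℕ}
    (D : PathSp r₀ n → EuclideanSpace ℝ (Fin n)) (κ : ℝ)
    (hκ₀ : 0 < κ) (hD0 : D 0 = 0)
    (hA5 : ∀ ξ η : PathSp r₀ n, ‖D ξ - D η‖ ≤ κ * MaxCompDist ξ η)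
    (ξ : PathSp r₀ n) (M : ℝ) (hM : 0 ≤ M) (h : ∀ θ i, |ξ θ i| ≤ M) (i : Fin n) :
    |D ξ i| ≤ κ * M := by
  have h1 := hA5 ξ 0
  rw [hD0, sub_zero] at h1
  refine (stmt6_abs_coord _ i).trans (h1.trans (mul_le_mul_of_nonneg_left ?_ hκ₀.le))
  unfold MaxCompDist
  refine Real.iSup_le (fun j => Real.iSup_le (fun θ => ?_) hM) hM
  simpa using h θ j

theorem stmt6_one {r₀ : ℝ} (hr₀ : 0 < r₀) {n : ℕ}
    (D : PathSp r₀ n → EuclideanSpace ℝ (Fin n)) (κ : ℝ)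
    (hκ₀ : 0 < κ) (hD0 : D 0 = 0)
    (hA5 : ∀ ξ η : PathSp r₀ n, ‖D ξ - D η‖ ≤ κ * MaxCompDist ξ η)
    (ξ : PathSp r₀ n) (M R : ℝ) (hξ : ‖ξ‖ ≤ M) (hM : 0 ≤ M) (hMR : M ≤ R)
    (hR : M + κ * M ≤ R - κ * R) :
    PathLeD hr₀ D (constPath r₀ n (-R)) ξ := by
  have hb : ∀ θ i, |ξ θ i| ≤ M := fun θ i =>
    (stmt6_abs_coord _ i).trans ((ξ.norm_coe_le_norm θ).trans hξ)
  have hc : ∀ θ i, constPath r₀ n (-R) θ i = -R := fun θ i => rfl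
  have hR0 : 0 ≤ R := hM.trans hMR
  refine ⟨fun θ i => ?_, fun i => ?_⟩
  · rw [hc]
    linarith [(abs_le.1 (hb θ i)).1]
  · have h1 := stmt6_D_bound D κ hκ₀ hD0 hA5 ξ M hM hb i
    have h2 := stmt6_D_bound D κ hκ₀ hD0 hA5 (constPath r₀ n (-R)) R hR0
      (fun θ i => by rw [hc, abs_neg, abs_of_nonneg hR0]) i
    rw [hc]
    linarith [(abs_le.1 (hb (zpt hr₀) i)).1, (abs_le.1 h1).2, (abs_le.1 h2).1]

/-- under D(0) = 0 and (A5), for any ξ₁, ξ₂ ∈ 𝒞 there is α ≤ 0 such that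
the constant path α𝟙 satisfies α𝟙 ≤_D ξ₁ and α𝟙 ≤_D ξ₂. -/
theorem stmt6 {r₀ : ℝ} (hr₀ : 0 < r₀) {n : ℕ} (hn : 1 ≤ n)
    (D : PathSp r₀ n → EuclideanSpace ℝ (Fin n)) (κ : ℝ)
    (hκ₀ : 0 < κ) (hκ₁ : κ < 1)
    (hD0 : D 0 = 0)
    (hA5 : ∀ ξ η : PathSp r₀ n, ‖D ξ - D η‖ ≤ κ * MaxCompDist ξ η)
    (ξ₁ ξ₂ : PathSp r₀ n) :
    ∃ α : ℝ, α ≤ 0 ∧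
      PathLeD hr₀ D (constPath r₀ n α) ξ₁ ∧
      PathLeD hr₀ D (constPath r₀ n α) ξ₂ := by
  have hM : 0 ≤ max ‖ξ₁‖ ‖ξ₂‖ := (norm_nonneg ξ₁).trans (le_max_left _ _)
  have hk : 0 < 1 - κ := by linarith
  generalize hMd : max ‖ξ₁‖ ‖ξ₂‖ = M at hM
  have h1 : ‖ξ₁‖ ≤ M := hMd ▸ le_max_left _ _
  have h2 : ‖ξ₂‖ ≤ M := hMd ▸ le_max_right _ _
  have hR : M + κ * M ≤ (M + κ * M) / (1 - κ) - κ * ((M + κ * M) / (1 - κ)) := by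
    apply le_of_eq
    field_simp
  have hMR : M ≤ (M + κ * M) / (1 - κ) := by
    rw [le_div_iff₀ hk]
    nlinarith [mul_nonneg hκ₀.le hM]
  refine ⟨-((M + κ * M) / (1 - κ)), by linarith, ?_, ?_⟩
  · exact stmt6_one hr₀ D κ hκ₀ hD0 hA5 ξ₁ M _ h1 hM hMR hR
  · exact stmt6_one hr₀ D κ hκ₀ hD0 hA5 ξ₂ M _ h2 hM hMR hR

end
end
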